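/- Let n ≥ 1, let Σ ∈ ℝ^{4n×4n} be symmetric with 2n×2n blocks Σ = [[σ_AA, σ_AA'],[σ_A'A, σ_A'A']], and assume: (i) Σ ⪰ ±(i/2)Ω; (ii) both complex matrices Σ − (i/2)Ω and Σ + (i/2)Ω have rank exactly 2n (purity of the Gaussian state with covariance matrix Σ); (iii) both complex matrices σ_A'A' − (i/2)Δ and σ_A'A' + (i/2)Δ are invertible. Let K, α ∈ ℝ^{2n×2n} with α symmetric, and suppose the matrix Σ' = [[K·σ_AA·Kᵀ + α, K·σ_AA'],[σ_A'A·Kᵀ, σ_A'A']] satisfies Σ' ⪰ ±(i/2)Ω. Then α ⪰ ±(i/2)(Δ − K·Δ·Kᵀ), i.e. both Hermitian matrices α ∓ (i/2)(Δ − K·Δ·Kᵀ) are positive semidefinite. -/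

import Mathlib

/-!
Fix a sign and write `Σ ∓ (i/2)Ω = [[A, B], [C, D]]`. The block `D` is invertible and has size `2n`,
so purity, i.e. the rank of the whole matrix being `2n`, says exactly that the Schur complement
vanishes: `A = B D⁻¹ C` (`schur_eq_of_rank`). On the other hand
`Σ' ∓ (i/2)Ω = [[A', K B], [C Kᵀ, D]]` with `A' = K σ_AA Kᵀ + α ∓ (i/2)Δ`, and positivity of this
matrix gives positivity of its Schur complement `A' - K B D⁻¹ C Kᵀ = A' - K A Kᵀ`
(`posSemidef_sub_conj`), which is `α ∓ (i/2)(Δ - K Δ Kᵀ)`.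
-/

open Matrix ComplexOrder

/-- The standard `2n × 2n` symplectic form: block-diagonal with `n` copies of `[[0,1],[-1,0]]`. -/
def symplJ (n : ℕ) : Matrix (Fin (2*n)) (Fin (2*n)) ℝ :=
  Matrix.of fun i j =>
    if (i : ℕ) + 1 = (j : ℕ) ∧ (i : ℕ) % 2 = 0 then 1
    else if (j : ℕ) + 1 = (i : ℕ) ∧ (j : ℕ) % 2 = 0 then -1 else 0

/-- `Ω = Δ ⊕ Δ`, the `4n × 4n` symplectic form. -/
def symplOmega (n : ℕ) : Matrix (Fin (2*n) ⊕ Fin (2*n)) (Fin (2*n) ⊕ Fin (2*n)) ℝ :=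
  Matrix.fromBlocks (symplJ n) 0 0 (symplJ n)

/-- View a real matrix as a complex matrix. -/
def toC {m : Type*} (M : Matrix m m ℝ) : Matrix m m ℂ := M.map Complex.ofReal

/-- `M ⪰ ± (i/2) J₀` : both `M - (i/2) J₀` and `M + (i/2) J₀` are positive semidefinite
as complex matrices. -/
def GeI {m : Type*} [Fintype m] (M J₀ : Matrix m m ℝ) : Prop :=
  (toC M - (Complex.I / 2) • toC J₀).PosSemidef ∧
  (toC M + (Complex.I / 2) • toC J₀).PosSemidef

/-- A block matrix with invertible lower right block `D` and rank equal to the size of `D`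
has vanishing Schur complement. Its kernel then projects isomorphically onto the first component,
so every `x` extends to a kernel vector `(x, y)`, and `y = -D⁻¹ C x` is forced. -/
lemma schur_eq_of_rank {m : Type*} [Fintype m] [DecidableEq m] {A B C D : Matrix m m ℂ}
    (hD : IsUnit D) (hr : (fromBlocks A B C D).rank = Fintype.card m) :
    A = B * D⁻¹ * C := by
  have hdet : IsUnit D.det := (Matrix.isUnit_iff_isUnit_det D).1 hD
  let M := fromBlocks A B C D
  let N := LinearMap.ker M.mulVecLin
  have hdim : Module.finrank ℂ N = Module.finrank ℂ (m → ℂ) := by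
    have h := LinearMap.finrank_range_add_finrank_ker M.mulVecLin
    have h1 : Module.finrank ℂ (LinearMap.range M.mulVecLin) = Fintype.card m := hr
    simp only [Module.finrank_fintype_fun_eq_card, Fintype.card_sum] at h ⊢
    change _ + Module.finrank ℂ N = _ at h
    omega
  have hker : ∀ v ∈ N, A *ᵥ (v ∘ Sum.inl) + B *ᵥ (v ∘ Sum.inr) = 0 ∧
      v ∘ Sum.inr = -(D⁻¹ *ᵥ (C *ᵥ (v ∘ Sum.inl))) := by
    intro v hv
    have h : fromBlocks A B C D *ᵥ v = 0 := hv
    rw [fromBlocks_mulVec] at h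
    have h1 : A *ᵥ (v ∘ Sum.inl) + B *ᵥ (v ∘ Sum.inr) = 0 :=
      funext fun i => congrFun h (Sum.inl i)
    have h2 : C *ᵥ (v ∘ Sum.inl) + D *ᵥ (v ∘ Sum.inr) = 0 :=
      funext fun i => congrFun h (Sum.inr i)
    refine ⟨h1, ?_⟩
    rw [eq_neg_of_add_eq_zero_left h2, mulVec_neg, mulVec_mulVec, Matrix.nonsing_inv_mul _ hdet,
      one_mulVec, neg_neg]
  let f : N →ₗ[ℂ] (m → ℂ) := (LinearMap.funLeft ℂ ℂ Sum.inl).comp N.subtype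
  have hf : ∀ v : N, f v = (v : m ⊕ m → ℂ) ∘ Sum.inl := fun _ => rfl
  have hinj : Function.Injective f := by
    rw [injective_iff_map_eq_zero]
    intro v hv
    rw [hf] at hv
    have h2 := (hker v v.2).2
    rw [hv, mulVec_zero, mulVec_zero, neg_zero] at h2
    ext i
    rcases i with i | i
    · exact congrFun hv i
    · exact congrFun h2 i
  have hsurj : Function.Surjective f :=
    (LinearMap.injective_iff_surjective_of_finrank_eq_finrank hdim).1 hinj
  apply Matrix.ext_of_mulVec_single
  intro i
  obtain ⟨v, hv⟩ := hsurj (Pi.single i 1)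
  obtain ⟨h1, h2⟩ := hker v v.2
  rw [hf] at hv
  rw [h2, hv, mulVec_neg, ← sub_eq_add_neg, sub_eq_zero] at h1
  rw [h1, mulVec_mulVec, mulVec_mulVec, Matrix.mul_assoc]

/-- Since `A = B D⁻¹ C` by `schur_eq_of_rank`, the matrix `A' - K A Kᴴ` is the Schur complement of
`D` in `[[A', K B], [C Kᴴ, D]]`, and hence inherits its positivity. -/
lemma posSemidef_sub_conj {m : Type*} [Fintype m] [DecidableEq m] {A B C D A' K : Matrix m m ℂ}
    (hD : IsUnit D) (hr : (fromBlocks A B C D).rank = Fintype.card m)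
    (h : (fromBlocks A' (K * B) (C * Kᴴ) D).PosSemidef) :
    (A' - K * A * Kᴴ).PosSemidef := by
  have hDp : D.PosSemidef := h.submatrix Sum.inr
  have hDpos : D.PosDef := hDp.posDef_iff_isUnit.2 hD
  have hC : (K * B)ᴴ = C * Kᴴ := (isHermitian_fromBlocks_iff.1 h.1).2.1
  have : Invertible D := hD.invertible
  rw [← hC, PosDef.fromBlocks₂₂ _ _ hDpos, hC] at h
  rw [schur_eq_of_rank hD hr]
  simpa only [Matrix.mul_assoc] using h

lemma toC_fromBlocks {m : Type*} (A B C D : Matrix m m ℝ) :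
    toC (fromBlocks A B C D) = fromBlocks (toC A) (toC B) (toC C) (toC D) :=
  fromBlocks_map ..

lemma toC_mul {m : Type*} [Fintype m] (A B : Matrix m m ℝ) : toC (A * B) = toC A * toC B :=
  Matrix.map_mul (f := Complex.ofRealHom)

lemma toC_add {m : Type*} (A B : Matrix m m ℝ) : toC (A + B) = toC A + toC B := by
  ext; simp [toC]

lemma toC_sub {m : Type*} (A B : Matrix m m ℝ) : toC (A - B) = toC A - toC B := by
  ext; simp [toC]

lemma toC_transpose {m : Type*} (A : Matrix m m ℝ) : toC Aᵀ = (toC A)ᴴ := by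
  ext; simp [toC]

lemma toC_add_smul_omega (n : ℕ) (A B C D : Matrix (Fin (2*n)) (Fin (2*n)) ℝ) (c : ℂ) :
    toC (fromBlocks A B C D) + c • toC (symplOmega n) =
      fromBlocks (toC A + c • toC (symplJ n)) (toC B) (toC C) (toC D + c • toC (symplJ n)) := by
  have h0 : toC (0 : Matrix (Fin (2*n)) (Fin (2*n)) ℝ) = 0 := by ext; simp [toC]
  rw [symplOmega, toC_fromBlocks, toC_fromBlocks, fromBlocks_smul, fromBlocks_add, h0]
  simp

/-- The theorem for one sign, with `c` in the role of `± i/2`. -/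
lemma posSemidef_noise (n : ℕ) (c : ℂ)
    (σAA σAA' σA'A σA'A' K α : Matrix (Fin (2*n)) (Fin (2*n)) ℝ)
    (hrank : (toC (fromBlocks σAA σAA' σA'A σA'A') + c • toC (symplOmega n)).rank = 2*n)
    (hinv : IsUnit (toC σA'A' + c • toC (symplJ n)))
    (h : (toC (fromBlocks (K * σAA * Kᵀ + α) (K * σAA') (σA'A * Kᵀ) σA'A')
      + c • toC (symplOmega n)).PosSemidef) :
    (toC α + c • toC (symplJ n - K * symplJ n * Kᵀ)).PosSemidef := by
  rw [toC_add_smul_omega] at hrank h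
  rw [toC_mul K, toC_mul σA'A, toC_transpose] at h
  have key := posSemidef_sub_conj hinv (by simpa using hrank) h
  convert key using 1
  simp only [toC_add, toC_sub, toC_mul, toC_transpose, Matrix.mul_add, Matrix.add_mul,
    Matrix.mul_smul, Matrix.smul_mul, smul_sub]
  abel

theorem stmt1 (n : ℕ) (hn : 1 ≤ n)
    (σAA σAA' σA'A σA'A' K α : Matrix (Fin (2*n)) (Fin (2*n)) ℝ)
    (hsym : (Matrix.fromBlocks σAA σAA' σA'A σA'A').IsSymm)
    (hSig : GeI (Matrix.fromBlocks σAA σAA' σA'A σA'A') (symplOmega n))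
    (hrankm : (toC (Matrix.fromBlocks σAA σAA' σA'A σA'A')
        - (Complex.I / 2) • toC (symplOmega n)).rank = 2*n)
    (hrankp : (toC (Matrix.fromBlocks σAA σAA' σA'A σA'A')
        + (Complex.I / 2) • toC (symplOmega n)).rank = 2*n)
    (hinvm : IsUnit (toC σA'A' - (Complex.I / 2) • toC (symplJ n)))
    (hinvp : IsUnit (toC σA'A' + (Complex.I / 2) • toC (symplJ n)))
    (hαsym : α.IsSymm)
    (hSig' : GeI (Matrix.fromBlocks (K * σAA * Kᵀ + α) (K * σAA') (σA'A * Kᵀ) σA'A')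
      (symplOmega n)) :
    GeI α (symplJ n - K * symplJ n * Kᵀ) := by
  simp only [GeI, sub_eq_add_neg (toC _), ← neg_smul] at *
  exact ⟨posSemidef_noise n _ _ _ _ _ K α hrankm hinvm hSig'.1,
    posSemidef_noise n _ _ _ _ _ K α hrankp hinvp hSig'.2⟩
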